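/- Let κ := ( ∫₀¹ x·|sin(1/x)| dx )^{−1} and let μ₁ be the Borel probability measure on ℝ with Lebesgue density x ↦ 1_{(0,1)}(x)·κ·x·|sin(1/x)|. Let T : (0,1) → ℝ be Borel measurable and piecewise affine with finitely many pieces, i.e., there exist 0 = t₀ < t₁ < ⋯ < t_n = 1 such that T is affine on each interval (t_{i−1}, t_i). Then the pushforward of the uniform (Lebesgue) distribution on (0,1) under T is not equal to μ₁. -/

import Mathlib

/-!
The oscillation of `sin (1/x)` is not needed: it is enough that the density of `mu1` is nonzero
almost everywhere on `(0,1)` but tends to `0` at `0`.  On a piece with slope `a` the pushforward has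
density at least `1/|a|` on the image of the piece, whereas on `(0,δ)` the density of `mu1` is at
most `κδ`.  If `κδ|a| < 1` for every slope, then the image of every piece meets `(0,δ)` in a set
whose preimage is null (`piece_null`; slope `0` needs no separate treatment).  Hence
`mu1 (0,δ) = 0`, which contradicts `mu1_Ioo_ne_zero`.
-/

open MeasureTheory

/-- The normalizing constant `κ = (∫₀¹ x |sin(1/x)| dx)⁻¹`. -/
noncomputable def kappa : ℝ := (∫ x in Set.Ioo (0 : ℝ) 1, x * |Real.sin (1 / x)|)⁻¹

/-- The Borel probability measure on ℝ with Lebesgue density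
`x ↦ 1_{(0,1)}(x) κ x |sin(1/x)|`. -/
noncomputable def mu1 : Measure ℝ :=
  volume.withDensity fun x =>
    ENNReal.ofReal (Set.indicator (Set.Ioo (0 : ℝ) 1)
      (fun x => kappa * x * |Real.sin (1 / x)|) x)

/-- `T : (0,1) → ℝ` is piecewise affine with finitely many pieces: there is a partition
`0 = t₀ < t₁ < ⋯ < t_n = 1` such that `T` is affine on each open interval. -/
def PiecewiseAffineOn01 (T : ℝ → ℝ) : Prop :=
  ∃ (n : ℕ) (t : ℕ → ℝ), 0 < n ∧ t 0 = 0 ∧ t n = 1 ∧ (∀ i < n, t i < t (i + 1)) ∧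
    ∀ i < n, ∃ a b : ℝ, ∀ u ∈ Set.Ioo (t i) (t (i + 1)), T u = a * u + b

open scoped Pointwise

lemma kappa_nonneg : 0 ≤ kappa := by
  unfold kappa
  apply inv_nonneg.2
  refine setIntegral_nonneg measurableSet_Ioo fun x hx => ?_
  exact mul_nonneg hx.1.le (abs_nonneg _)

lemma mu1_le_of_subset {δ : ℝ} {A : Set ℝ} (hA : A ⊆ Set.Ioo 0 δ) :
    mu1 A ≤ ENNReal.ofReal (kappa * δ) * volume A := by
  unfold mu1
  rw [withDensity_apply', ← setLIntegral_const]
  refine setLIntegral_mono measurable_const fun x hx => ENNReal.ofReal_le_ofReal ?_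
  have hx' := hA hx
  have hk := kappa_nonneg
  have hδ : 0 ≤ kappa * δ := mul_nonneg hk (hx'.1.trans hx'.2).le
  refine Set.indicator_apply_le' (fun _ => ?_) (fun _ => hδ)
  calc kappa * x * |Real.sin (1 / x)| ≤ kappa * x * 1 :=
        mul_le_mul_of_nonneg_left (Real.abs_sin_le_one _) (mul_nonneg hk hx'.1.le)
    _ ≤ kappa * δ := by
        rw [mul_one]; exact mul_le_mul_of_nonneg_left hx'.2.le hk

lemma volume_affine_image (a b : ℝ) (S : Set ℝ) :
    volume ((fun u => a * u + b) '' S) = ENNReal.ofReal |a| * volume S := by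
  have h : (fun u => a * u + b) '' S = (fun u => u + b) '' (a • S) := by
    rw [← Set.image_smul, Set.image_image]; rfl
  rw [h, Set.image_add_right, measure_preimage_add_right, Measure.addHaar_smul]
  simp

lemma mu1_Ioo_ne_zero (hk : kappa ≠ 0) {δ : ℝ} (hδ : 0 < δ) (hδ1 : δ ≤ 1) :
    mu1 (Set.Ioo 0 δ) ≠ 0 := by
  intro h
  unfold mu1 at h
  rw [withDensity_apply', setLIntegral_eq_zero_iff measurableSet_Ioo] at h
  swap
  · refine ENNReal.measurable_ofReal.comp (Measurable.indicator ?_ measurableSet_Ioo)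
    fun_prop
  -- `sin (1/x)` vanishes only at the points `1/(mπ)`, of which there are countably many.
  have hc : (Set.range fun m : ℤ => 1 / ((m : ℝ) * Real.pi)).Countable := Set.countable_range _
  have h0 : volume (Set.Ioo 0 δ) = 0 := by
    have := hc.ae_notMem (volume : Measure ℝ)
    refine measure_eq_zero_iff_ae_notMem.2 ?_
    filter_upwards [h, this] with x hx hx2 hm
    have h1 := hx hm
    have hm1 : x ∈ Set.Ioo (0 : ℝ) 1 := ⟨hm.1, hm.2.trans_le hδ1⟩
    rw [Set.indicator_of_mem hm1] at h1
    have h2 := ENNReal.ofReal_eq_zero.1 h1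
    have h3 : 0 < kappa * x := mul_pos (kappa_nonneg.lt_of_ne' hk) hm.1
    have h4 : Real.sin (1 / x) = 0 := by
      by_contra h5
      exact absurd h2 (not_le.2 (mul_pos h3 (abs_pos.2 h5)))
    obtain ⟨m, hm'⟩ := Real.sin_eq_zero_iff.1 h4
    exact hx2 ⟨m, by simp only [hm', one_div_one_div]⟩
  rw [Real.volume_Ioo, ENNReal.ofReal_eq_zero] at h0
  linarith

/-- If `mu1` is the pushforward and `T` has slope `a` on `P` with `κδ|a| < 1`, the part `S` of `P`
sent to `(0,δ)` is null: `vol S ≤ mu1 (T S) ≤ κδ vol (T S) = κδ|a| vol S`. -/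
lemma piece_null {T : ℝ → ℝ} (hT : Measurable T)
    (h : (volume.restrict (Set.Ioo (0 : ℝ) 1)).map T = mu1) {P : Set ℝ} {a b δ : ℝ}
    (haff : ∀ u ∈ P, T u = a * u + b) (hδ : 0 ≤ δ) (hs : kappa * δ * |a| < 1) :
    volume (P ∩ (T ⁻¹' Set.Ioo 0 δ ∩ Set.Ioo 0 1)) = 0 := by
  set S := P ∩ (T ⁻¹' Set.Ioo 0 δ ∩ Set.Ioo 0 1) with hS
  have himg : (fun u => a * u + b) '' S = T '' S :=
    Set.image_congr fun u hu => (haff u hu.1).symm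
  have hsub : T '' S ⊆ Set.Ioo 0 δ := by
    rintro _ ⟨u, hu, rfl⟩
    exact hu.2.1
  have h1 : volume S ≤ mu1 (T '' S) := by
    calc volume S = (volume.restrict (Set.Ioo (0 : ℝ) 1)) S := by
          rw [Measure.restrict_eq_self _ fun u hu => hu.2.2]
      _ ≤ (volume.restrict (Set.Ioo (0 : ℝ) 1)) (T ⁻¹' (T '' S)) :=
          measure_mono (Set.subset_preimage_image T S)
      _ ≤ _ := by rw [← h]; exact Measure.le_map_apply hT.aemeasurable _
  have h2 : volume S ≤ ENNReal.ofReal (kappa * δ * |a|) * volume S := by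
    refine h1.trans ((mu1_le_of_subset hsub).trans_eq ?_)
    rw [← himg, volume_affine_image, ← mul_assoc,
      ← ENNReal.ofReal_mul (mul_nonneg kappa_nonneg hδ)]
  have hfin : volume S ≠ ⊤ := by
    refine ((measure_mono (fun u hu => hu.2.2 : S ⊆ Set.Ioo 0 1)).trans_lt ?_).ne
    simp
  by_contra h0
  have h3 : ENNReal.ofReal (kappa * δ * |a|) * volume S < 1 * volume S :=
    ENNReal.mul_lt_mul_left h0 hfin (ENNReal.ofReal_lt_one.2 hs)
  rw [one_mul] at h3
  exact absurd h2 (not_le.2 h3)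

lemma exists_piece {n : ℕ} {t : ℕ → ℝ} (h0 : t 0 = 0) (h1 : t n = 1) {x : ℝ}
    (hx : x ∈ Set.Ioo (0 : ℝ) 1) :
    x ∈ Set.range t ∨ ∃ i < n, x ∈ Set.Ioo (t i) (t (i + 1)) := by
  classical
  have hex : ∃ j, x ≤ t j := ⟨n, h1 ▸ hx.2.le⟩
  have hle : Nat.find hex ≤ n := Nat.find_min' hex (h1 ▸ hx.2.le)
  have hsp := Nat.find_spec hex
  have hmin := fun m => Nat.find_min hex (m := m)
  generalize Nat.find hex = j at *
  cases j with
  | zero => exact absurd hsp (by rw [h0]; exact not_le.2 hx.1)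
  | succ j =>
    rcases hsp.eq_or_lt with he | hl
    · exact Or.inl ⟨_, he.symm⟩
    · exact Or.inr ⟨j, by omega, not_le.1 (hmin j (by omega)), hl⟩

/-- Remark 2.1(i) of the paper: no Borel piecewise affine map `T` (with finitely many
pieces) pushes the uniform distribution on `(0,1)` forward to `μ₁`. -/
theorem pushforward_piecewise_affine_ne_mu1
    (T : ℝ → ℝ) (hT_meas : Measurable T) (hT_pa : PiecewiseAffineOn01 T) :
    (volume.restrict (Set.Ioo (0 : ℝ) 1)).map T ≠ mu1 := by
  intro h
  obtain ⟨n, t, -, h0, h1, -, haff⟩ := hT_pa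
  -- If `kappa` were `0`, then `mu1` would be the zero measure, but the pushforward has mass `1`.
  have hk : kappa ≠ 0 := by
    intro hk
    have hz : mu1 = 0 := by simp [mu1, hk]
    have := congrArg (fun μ => μ Set.univ) h
    simp [Measure.map_apply hT_meas MeasurableSet.univ, hz] at this
  choose! a b hab using haff
  have hkn := kappa_nonneg
  set M := ∑ i ∈ Finset.range n, |a i| with hM
  have hMn : 0 ≤ M := Finset.sum_nonneg fun _ _ => abs_nonneg _
  have hkM : 0 ≤ kappa * M := mul_nonneg hkn hMn
  obtain ⟨δ, hδ, hδ1, hδM⟩ : ∃ δ : ℝ, 0 < δ ∧ δ ≤ 1 ∧ kappa * δ * M < 1 := by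
    refine ⟨1 / (1 + kappa * M), by positivity, ?_, ?_⟩
    · rw [div_le_one (by positivity)]; linarith
    · rw [show kappa * (1 / (1 + kappa * M)) * M = kappa * M / (1 + kappa * M) by ring,
        div_lt_one (by positivity)]
      linarith
  refine mu1_Ioo_ne_zero hk hδ hδ1 ?_
  rw [← h, Measure.map_apply hT_meas measurableSet_Ioo,
    Measure.restrict_apply (hT_meas measurableSet_Ioo)]
  refine measure_mono_null (t := Set.range t ∪ ⋃ i ∈ Finset.range n,
    (Set.Ioo (t i) (t (i + 1)) ∩ (T ⁻¹' Set.Ioo 0 δ ∩ Set.Ioo 0 1))) ?_ ?_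
  · intro x hx
    rcases exists_piece h0 h1 hx.2 with hr | ⟨i, hi, hxi⟩
    · exact Or.inl hr
    · exact Or.inr (Set.mem_biUnion (Finset.mem_coe.2 (Finset.mem_range.2 hi)) ⟨hxi, hx⟩)
  · refine measure_union_null ((Set.countable_range t).measure_zero _) ?_
    refine (measure_biUnion_null_iff (Finset.range n).countable_toSet).2 fun i hi => ?_
    have hi' : i < n := Finset.mem_range.1 hi
    refine piece_null hT_meas h (hab i hi') hδ.le (lt_of_le_of_lt ?_ hδM)
    exact mul_le_mul_of_nonneg_left
      (Finset.single_le_sum (f := fun i => |a i|) (fun _ _ => abs_nonneg _) hi)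
      (mul_nonneg hkn hδ.le)
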